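/- Let f_UFR(n,k) denote the number of unit Fubini rankings with n competitors having exactly k lucky cars, with conventions f_UFR(0,0) = 1 and f_UFR(0,k) = 0 for k ≥ 1. Then for all n ≥ 1 and k ≥ 1, as an identity of integers, f_UFR(n,k) = k·f_UFR(n−1,k−1) + (2k−n+1)·f_UFR(n−1,k), where the second term is interpreted in ℤ (note f_UFR(n−1,k) = 0 whenever 2k−n+1 < 0). -/

import Mathlib

/-- A Fubini ranking with `n` competitors: entries are in `[n]` (represented by `Fin n`,
where `i : Fin n` stands for the rank `i.val + 1`), and for every rank `r` occurring among
the entries, the number of indices `j` whose entry is strictly smaller than `r` equals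
`r - 1` (i.e. `r.val` in the `Fin n` encoding). -/
def IsFubini {n : ℕ} (α : Fin n → Fin n) : Prop :=
  ∀ r : Fin n, (∃ i, α i = r) →
    (Finset.univ.filter (fun j => α j < r)).card = (r : ℕ)

/-- The set of lucky cars of `α`: car `i` is lucky iff it is the first occurrence of its
value, i.e. `α j ≠ α i` for all `j < i`. -/
def luckySet {n : ℕ} (α : Fin n → Fin n) : Finset (Fin n) :=
  Finset.univ.filter (fun i => ∀ j, j < i → α j ≠ α i)

/-- The number of lucky cars of `α`. -/
def lucky {n : ℕ} (α : Fin n → Fin n) : ℕ := (luckySet α).card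

instance {n : ℕ} : DecidablePred (IsFubini (n := n)) := fun α =>
  inferInstanceAs (Decidable (∀ r : Fin n, (∃ i, α i = r) →
    (Finset.univ.filter (fun j => α j < r)).card = (r : ℕ)))

/-- `α` has every value occurring at most twice among its entries (the "unit" condition:
a unit Fubini ranking is a Fubini ranking in which at most two competitors share a rank). -/
def IsUnit2 {n : ℕ} (α : Fin n → Fin n) : Prop :=
  ∀ r : Fin n, (Finset.univ.filter (fun i => α i = r)).card ≤ 2

/-- The number of unit Fubini rankings with `n` competitors having exactly `k` lucky cars.
(For `n = 0` this gives `fUFR 0 0 = 1` and `fUFR 0 k = 0` for `k ≥ 1`.) -/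
noncomputable def fUFR (n k : ℕ) : ℕ :=
  Nat.card {α : Fin n → Fin n // IsFubini α ∧ IsUnit2 α ∧ lucky α = k}

open Finset

/-- Every value of `g` is attained once or twice. -/
def HasUnitFibers {ι T : Type*} [Fintype ι] [DecidableEq T] (g : ι → T) : Prop :=
  ∀ r, 1 ≤ #{i | g i = r} ∧ #{i | g i = r} ≤ 2

lemma HasUnitFibers.surjective {ι T : Type*} [Fintype ι] [DecidableEq T] {g : ι → T}
    (hg : HasUnitFibers g) : Function.Surjective g := by
  intro r
  obtain ⟨i, hi⟩ := Finset.card_pos.mp (hg r).1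
  exact ⟨i, by simpa using hi⟩

/-- The number of lucky cars is the number of distinct values. -/
lemma lucky_eq_card_image {n : ℕ} (α : Fin n → Fin n) : lucky α = #(univ.image α) := by
  have himage : (luckySet α).image α = univ.image α := by
    ext r
    simp only [mem_image, luckySet, mem_filter, mem_univ, true_and]
    refine ⟨fun ⟨i, _, hi⟩ => ⟨i, hi⟩, fun ⟨i, hi⟩ => ?_⟩
    obtain ⟨m, hm, hmin⟩ := WellFounded.has_min (wellFounded_lt (α := Fin n))
      {i | α i = r} ⟨i, hi⟩
    have hm' : α m = r := hm
    exact ⟨m, fun j hj h => hmin j (h.trans hm') hj, hm'⟩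
  rw [← himage, card_image_of_injOn, lucky]
  intro i hi j hj hij
  simp only [luckySet, coe_filter, mem_univ, true_and, Set.mem_ofPred_eq] at hi hj
  rcases lt_trichotomy i j with h | h | h
  · exact absurd hij (hj i h)
  · exact h
  · exact absurd hij.symm (hi j h)

/-- The competition ranking induced by `g`: the rank of `i` counts the indices with a
smaller value. -/
def competitionRank {n : ℕ} {T : Type*} [LinearOrder T] (g : Fin n → T) (i : Fin n) : Fin n :=
  ⟨#{j | g j < g i}, by
    have h : #{j | g j < g i} < #(univ : Finset (Fin n)) :=
      card_lt_card (by
        rw [ssubset_univ_iff]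
        intro h
        have := h ▸ mem_univ i
        simp at this)
    simpa using h⟩

lemma competitionRank_lt_iff {n : ℕ} {T : Type*} [LinearOrder T] (g : Fin n → T)
    (i j : Fin n) : competitionRank g i < competitionRank g j ↔ g i < g j := by
  have mono : ∀ a b, g a ≤ g b → competitionRank g a ≤ competitionRank g b := by
    intro a b h
    refine Fin.mk_le_mk.mpr (card_le_card fun x hx => ?_)
    simp only [mem_filter, mem_univ, true_and] at hx ⊢
    exact hx.trans_le h
  refine ⟨fun h => ?_, fun h => ?_⟩
  · by_contra hc
    exact absurd (mono j i (not_lt.mp hc)) (not_le.mpr h)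
  · refine Fin.mk_lt_mk.mpr (card_lt_card ?_)
    rw [ssubset_iff_of_subset]
    · exact ⟨i, by simpa using h, by simp⟩
    · intro x hx
      simp only [mem_filter, mem_univ, true_and] at hx ⊢
      exact hx.trans h

lemma eq_iff_of_lt_iff {ι S T : Type*} [LinearOrder S] [LinearOrder T] {f : ι → S} {g : ι → T}
    (h : ∀ i j, f i < f j ↔ g i < g j) (i j : ι) : f i = f j ↔ g i = g j := by
  have h₁ := h i j
  have h₂ := h j i
  rw [le_antisymm_iff, le_antisymm_iff, ← not_lt, ← not_lt, ← not_lt, ← not_lt, h₁, h₂]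

/-- A surjection onto `Fin k` is determined by the weak order it induces. -/
lemma eq_of_lt_iff_of_surjective {ι : Type*} {k : ℕ} {g h : ι → Fin k}
    (hg : Function.Surjective g) (hgh : ∀ i j, g i < g j ↔ h i < h j) : g = h := by
  obtain ⟨s, hs⟩ := hg.hasRightInverse
  have hmono : StrictMono (h ∘ s) := fun a b hab => by
    simpa using (hgh (s a) (s b)).mp (by rwa [hs a, hs b])
  have hid : h ∘ s = id := (hmono.range_inj strictMono_id).mp (by
    rw [(Finite.surjective_of_injective hmono.injective).range_eq]; simp)
  funext i
  have heq := (eq_iff_of_lt_iff hgh (s (g i)) i).mp (hs (g i))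
  rw [← heq]
  exact (congrFun hid (g i)).symm

lemma isFubini_competitionRank {n : ℕ} {T : Type*} [LinearOrder T] (g : Fin n → T) :
    IsFubini (competitionRank g) := by
  rintro r ⟨i, rfl⟩
  simp only [competitionRank_lt_iff]
  rfl

/-- A Fubini ranking is determined by the weak order it induces. -/
lemma IsFubini.competitionRank_eq {n : ℕ} {T : Type*} [LinearOrder T] {α : Fin n → Fin n}
    (hα : IsFubini α) {g : Fin n → T} (h : ∀ i j, g i < g j ↔ α i < α j) :
    competitionRank g = α := by
  funext i
  apply Fin.ext
  rw [← hα (α i) ⟨i, rfl⟩]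
  simp only [competitionRank, h]

lemma isUnit2_competitionRank {n : ℕ} {T : Type*} [LinearOrder T] {g : Fin n → T}
    (hg : HasUnitFibers g) : IsUnit2 (competitionRank g) := by
  intro r
  by_cases hr : ∃ i, competitionRank g i = r
  · obtain ⟨i, rfl⟩ := hr
    simp only [eq_iff_of_lt_iff (competitionRank_lt_iff g)]
    exact (hg (g i)).2
  · push Not at hr
    simp [hr]

lemma card_image_competitionRank {n k : ℕ} {g : Fin n → Fin k}
    (hg : Function.Surjective g) : #(univ.image (competitionRank g)) = k := by
  obtain ⟨s, hs⟩ := hg.hasRightInverse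
  have himage : univ.image (competitionRank g) = univ.image (competitionRank g ∘ s) := by
    ext r
    simp only [mem_image, mem_univ, true_and, Function.comp]
    refine ⟨fun ⟨i, hi⟩ => ⟨g i, ?_⟩, fun ⟨a, ha⟩ => ⟨s a, ha⟩⟩
    rw [← hi]
    exact (eq_iff_of_lt_iff (competitionRank_lt_iff g) _ _).mpr (hs (g i))
  rw [himage, card_image_of_injective _ ?_, card_univ, Fintype.card_fin]
  intro a b hab
  have := (eq_iff_of_lt_iff (competitionRank_lt_iff g) _ _).mp hab
  rwa [hs a, hs b] at this

open Classical in
/-- The number of maps `Fin n → Fin k` all of whose values are attained once or twice. -/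
noncomputable def unitFiberCount (n k : ℕ) : ℕ :=
  #{g : Fin n → Fin k | HasUnitFibers g}

lemma fUFR_eq_unitFiberCount (n k : ℕ) : fUFR n k = unitFiberCount n k := by
  classical
  rw [fUFR, unitFiberCount, ← Fintype.card_subtype, ← Nat.card_eq_fintype_card]
  symm
  refine Nat.card_eq_of_bijective
    (fun g => ⟨competitionRank g.1, isFubini_competitionRank g.1, isUnit2_competitionRank g.2,
      by rw [lucky_eq_card_image, card_image_competitionRank g.2.surjective]⟩) ⟨?_, ?_⟩
  · intro g h hgh
    have heq : competitionRank g.1 = competitionRank h.1 := congrArg Subtype.val hgh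
    refine Subtype.ext (eq_of_lt_iff_of_surjective g.2.surjective fun i j => ?_)
    rw [← competitionRank_lt_iff, heq, competitionRank_lt_iff]
  · rintro ⟨α, hF, hU, hl⟩
    rw [lucky_eq_card_image] at hl
    let e := (univ.image α).orderIsoOfFin hl
    let g : Fin n → Fin k := fun i => e.symm ⟨α i, mem_image_of_mem α (mem_univ i)⟩
    have hlt : ∀ i j, g i < g j ↔ α i < α j := fun i j => by simp [g]
    refine ⟨⟨g, fun r => ?_⟩, Subtype.ext (hF.competitionRank_eq hlt)⟩
    obtain ⟨i, -, hi⟩ := mem_image.mp (e r).2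
    have hgi : g i = r := by simp [g, hi]
    subst hgi
    refine ⟨card_pos.mpr ⟨i, by simp⟩, ?_⟩
    simp only [eq_iff_of_lt_iff hlt]
    exact hU (α i)

lemma card_fiber_cons {n : ℕ} {T : Type*} [DecidableEq T] (v : T) (f : Fin n → T) (r : T) :
    #{i | (Fin.cons v f : Fin (n + 1) → T) i = r} =
      (if v = r then 1 else 0) + #{i | f i = r} := by
  simp only [card_filter, Fin.sum_univ_succ, Fin.cons_zero, Fin.cons_succ]

lemma hasUnitFibers_cons_iff {n : ℕ} {T : Type*} [DecidableEq T] (v : T) (f : Fin n → T) :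
    HasUnitFibers (Fin.cons v f : Fin (n + 1) → T) ↔
      ((∀ i, f i ≠ v) ∧ ∀ r, r ≠ v → 1 ≤ #{i | f i = r} ∧ #{i | f i = r} ≤ 2) ∨
      (HasUnitFibers f ∧ #{i | f i = v} = 1) := by
  have h0 : (∀ i, f i ≠ v) ↔ #{i | f i = v} = 0 := by
    simp [filter_eq_empty_iff]
  simp only [HasUnitFibers, card_fiber_cons, h0]
  constructor
  · intro h
    have hne : ∀ r, r ≠ v → 1 ≤ #{i | f i = r} ∧ #{i | f i = r} ≤ 2 := fun r hr => by
      simpa [hr.symm] using h r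
    have hv := h v
    simp only [if_true] at hv
    rcases Nat.eq_zero_or_pos #{i | f i = v} with hz | hz
    · exact Or.inl ⟨hz, hne⟩
    · refine Or.inr ⟨fun r => ?_, by omega⟩
      by_cases hr : r = v
      · subst hr; omega
      · exact hne r hr
  · rintro (⟨hz, h⟩ | ⟨h, hv⟩) r <;> by_cases hr : v = r
    · subst hr; simp [hz]
    · simpa [hr] using h r (Ne.symm hr)
    · subst hr; simp [hv]
    · simpa [hr] using h r

open Classical in
lemma card_avoiding_eq_unitFiberCount (n k : ℕ) (v : Fin (k + 1)) :
    #{f : Fin n → Fin (k + 1) | (∀ i, f i ≠ v) ∧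
      ∀ r, r ≠ v → 1 ≤ #{i | f i = r} ∧ #{i | f i = r} ≤ 2} = unitFiberCount n k := by
  symm
  refine card_bij (fun g _ => v.succAbove ∘ g) ?_ ?_ ?_
  · intro g hg
    simp only [mem_filter, mem_univ, true_and] at hg ⊢
    refine ⟨fun i => Fin.succAbove_ne v (g i), fun r hr => ?_⟩
    obtain ⟨s, rfl⟩ := Fin.exists_succAbove_eq hr
    simpa using hg s
  · intro g _ h _ hgh
    exact Fin.succAbove_right_injective.comp_left hgh
  · intro f hf
    simp only [mem_filter, mem_univ, true_and] at hf
    choose g hg using fun i => Fin.exists_succAbove_eq (hf.1 i)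
    obtain rfl : v.succAbove ∘ g = f := funext hg
    refine ⟨g, ?_, rfl⟩
    simp only [mem_filter, mem_univ, true_and]
    intro s
    simpa using hf.2 (v.succAbove s) (Fin.succAbove_ne v s)

/-- A map from `n` points onto `k` values, each attained once or twice, attains exactly
`2 * k - n` values once. -/
lemma HasUnitFibers.card_singletons {n k : ℕ} {f : Fin n → Fin k} (hf : HasUnitFibers f) :
    (#{v | #{i | f i = v} = 1} : ℤ) = 2 * k - n := by
  have hn : (n : ℤ) = ∑ v : Fin k, (#{i | f i = v} : ℤ) := by
    have := card_eq_sum_card_fiberwise (f := f) (s := univ) (t := univ) (by simp)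
    rw [card_univ, Fintype.card_fin] at this
    exact_mod_cast this
  have hk : (2 * k : ℤ) = ∑ _v : Fin k, (2 : ℤ) := by simp [mul_comm]
  rw [hk, hn, ← sum_sub_distrib, card_filter]
  push_cast
  refine sum_congr rfl fun v _ => ?_
  have := hf v
  split_ifs <;> omega

lemma unitFiberCount_succ (n k : ℕ) :
    (unitFiberCount (n + 1) (k + 1) : ℤ) =
      (k + 1) * unitFiberCount n k +
        (2 * (k + 1) - n) * unitFiberCount n (k + 1) := by
  classical
  have hcons : unitFiberCount (n + 1) (k + 1) =
      ∑ v : Fin (k + 1), #{f : Fin n → Fin (k + 1) |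
        HasUnitFibers (Fin.cons v f : Fin (n + 1) → Fin (k + 1))} := by
    simp only [unitFiberCount, card_filter]
    rw [← (Fin.consEquiv fun _ : Fin (n + 1) => Fin (k + 1)).sum_comp, Fintype.sum_prod_type]
    rfl
  have hsplit : ∀ v : Fin (k + 1), #{f : Fin n → Fin (k + 1) |
        HasUnitFibers (Fin.cons v f : Fin (n + 1) → Fin (k + 1))} =
      unitFiberCount n k +
        #{f : Fin n → Fin (k + 1) | HasUnitFibers f ∧ #{i | f i = v} = 1} := by
    intro v
    simp only [hasUnitFibers_cons_iff]
    rw [filter_or, card_union_of_disjoint, card_avoiding_eq_unitFiberCount]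
    rw [disjoint_filter]
    rintro f - ⟨hv, -⟩ ⟨hf, -⟩
    obtain ⟨i, hi⟩ := hf.surjective v
    exact hv i hi
  have hswap : ∑ v : Fin (k + 1),
        #{f : Fin n → Fin (k + 1) | HasUnitFibers f ∧ #{i | f i = v} = 1} =
      ∑ f : Fin n → Fin (k + 1) with HasUnitFibers f, #{v | #{i | f i = v} = 1} := by
    simp only [← filter_filter]
    exact sum_card_bipartiteAbove_eq_sum_card_bipartiteBelow
      (fun (v : Fin (k + 1)) (f : Fin n → Fin (k + 1)) => #{i | f i = v} = 1)
  rw [hcons, sum_congr rfl fun v _ => hsplit v, sum_add_distrib, hswap]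
  push_cast
  rw [sum_congr rfl fun f hf => HasUnitFibers.card_singletons (mem_filter.mp hf).2]
  simp only [sum_const, card_univ, Fintype.card_fin, nsmul_eq_mul, unitFiberCount]
  push_cast
  ring


/-- For `n, k ≥ 1`, as an identity of integers,
`f_UFR(n,k) = k·f_UFR(n−1,k−1) + (2k−n+1)·f_UFR(n−1,k)`. -/
theorem fUFR_recurrence (n k : ℕ) (hn : 1 ≤ n) (hk : 1 ≤ k) :
    (fUFR n k : ℤ)
      = k * fUFR (n - 1) (k - 1) + (2 * (k : ℤ) - n + 1) * fUFR (n - 1) k := by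
  obtain ⟨n, rfl⟩ := Nat.exists_eq_add_of_le' hn
  obtain ⟨k, rfl⟩ := Nat.exists_eq_add_of_le' hk
  simp only [fUFR_eq_unitFiberCount, Nat.add_sub_cancel, unitFiberCount_succ]
  push_cast
  ring
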